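/- (Small products property) Let H ⊆ L be an arbitrary commutative field extension. Then for all positive integers r, s with r, s ≤ dim_H L, there exist H-subspaces A, B of L with dim_H A = r, dim_H B = s, and dim_H⟨AB⟩ ≤ r + s − 1. -/

import Mathlib

/-!
Give each member `e i` of a linearly independent family a degree `ν i`, no two the same, in such a
way that `e i * e j` is a combination of members of degree at most `ν i + ν j`. Then the spans of
the members of degree below `r` and below `s` multiply into the span of those of degree below
`r + s - 1`.

The powers of a transcendental element form such a family. A finite extension is a tower of simple
extensions, so it suffices to pass from `K` to `K(x)`: if `b 0, ..., b (m - 1)` is such a basis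
of `K`, give `b a * x ^ q` with `a < m` and `q < [K(x) : K]` the degree `a + m * q`. As long as
`q + p < [K(x) : K]`, the product `(b a * b c) * x ^ (q + p)` is controlled by the property of `b`;
otherwise the sum of the two degrees exceeds every degree that occurs and nothing is to be checked.
-/

open Module Set IntermediateField

section DegreeSpan

variable {R M N ι : Type*} [Semiring R] [AddCommMonoid M] [Module R M] [AddCommMonoid N]
  [Module R N] {ν : ι → ℕ}

/-- The span of the members of degree less than `n` of a family `e` whose member `e i` is given
the degree `ν i`. -/
def degreeSpan (R : Type*) [Semiring R] [Module R M] (ν : ι → ℕ) (e : ι → M) (n : ℕ) :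
    Submodule R M :=
  Submodule.span R (e '' (ν ⁻¹' Iio n))

theorem mem_degreeSpan (e : ι → M) {i : ι} {n : ℕ} (hi : ν i < n) : e i ∈ degreeSpan R ν e n :=
  Submodule.subset_span (mem_image_of_mem e hi)

theorem degreeSpan_mono (ν : ι → ℕ) (e : ι → M) : Monotone (degreeSpan R ν e) :=
  fun _ _ h => Submodule.span_mono (image_mono (preimage_mono (Iio_subset_Iio h)))

theorem map_degreeSpan (f : M →ₗ[R] N) (ν : ι → ℕ) (e : ι → M) (n : ℕ) :
    (degreeSpan R ν e n).map f = degreeSpan R ν (f ∘ e) n := by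
  rw [degreeSpan, degreeSpan, Submodule.map_span, image_comp]

theorem degreeSpan_val_eq_top {m n : ℕ} (b : Basis (Fin m) R M) (h : m ≤ n) :
    degreeSpan R Fin.val b n = ⊤ :=
  top_unique <| b.span_eq.ge.trans <| Submodule.span_le.2 <|
    range_subset_iff.2 fun i => mem_degreeSpan b (i.isLt.trans_le h)

theorem finite_preimage_Iio (hν : ν.Injective) (n : ℕ) : (ν ⁻¹' Iio n).Finite :=
  (finite_Iio n).preimage hν.injOn

theorem finite_degreeSpan (hν : ν.Injective) (e : ι → M) (n : ℕ) :
    Module.Finite R (degreeSpan R ν e n) :=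
  Module.Finite.span_of_finite R ((finite_preimage_Iio hν n).image e)

theorem finrank_degreeSpan_le [StrongRankCondition R] (hν : ν.Injective) (e : ι → M) (n : ℕ) :
    finrank R (degreeSpan R ν e n) ≤ n := by
  have := (finite_preimage_Iio hν n).fintype
  calc finrank R (degreeSpan R ν e n)
      ≤ Fintype.card (ν ⁻¹' Iio n) := by
        rw [degreeSpan, image_eq_range]
        exact finrank_range_le_card _
    _ ≤ Fintype.card (Iio n) :=
        Fintype.card_le_of_injective _ (hν.restrictPreimage (Iio n))
    _ = n := by simp

theorem finrank_degreeSpan [StrongRankCondition R] {e : ι → M} (he : LinearIndependent R e)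
    (hν : ν.Injective) {n : ℕ} (hn : Iio n ⊆ range ν) :
    finrank R (degreeSpan R ν e n) = n := by
  have := nontrivial_of_invariantBasisNumber R
  have := (finite_preimage_Iio hν n).fintype
  calc finrank R (degreeSpan R ν e n)
      = Fintype.card (ν ⁻¹' Iio n) := by
        rw [degreeSpan, image_eq_range]
        exact finrank_span_eq_card (he.comp _ Subtype.val_injective)
    _ = Nat.card (Iio n) := by
        rw [← Nat.card_eq_fintype_card, Nat.card_preimage_of_injective hν hn]
    _ = n := by simp

end DegreeSpan

section IsDegreeFiltered

variable {R A B ι : Type*} [CommSemiring R] [Semiring A] [Algebra R A] [Semiring B] [Algebra R B]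
  {ν : ι → ℕ} {e : ι → A}

/-- A family `e`, whose member `e i` is given the degree `ν i`, is multiplicatively filtered: each
`e i * e j` is a combination of members of degree at most `ν i + ν j`. The `+ 1` is there because
the bound in `degreeSpan` is strict. -/
def IsDegreeFiltered (R : Type*) [CommSemiring R] [Algebra R A] (ν : ι → ℕ) (e : ι → A) : Prop :=
  ∀ i j, e i * e j ∈ degreeSpan R ν e (ν i + ν j + 1)

theorem isDegreeFiltered_pow (x : A) : IsDegreeFiltered R id (fun n : ℕ => x ^ n) := fun i j => by
  rw [← pow_add]
  exact mem_degreeSpan (x ^ ·) (Nat.lt_succ_self (i + j))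

theorem IsDegreeFiltered.map (h : IsDegreeFiltered R ν e) (f : A →ₐ[R] B) :
    IsDegreeFiltered R ν (f ∘ e) := fun i j => by
  have hmem := Submodule.mem_map_of_mem (f := f.toLinearMap) (h i j)
  rw [map_degreeSpan] at hmem
  simpa only [AlgHom.toLinearMap_apply, map_mul] using! hmem

theorem IsDegreeFiltered.degreeSpan_mul_le (h : IsDegreeFiltered R ν e) (r s : ℕ) :
    degreeSpan R ν e r * degreeSpan R ν e s ≤ degreeSpan R ν e (r + s - 1) := by
  conv_lhs => rw [degreeSpan, degreeSpan, Submodule.span_mul_span]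
  rw [Submodule.span_le]
  rintro _ ⟨_, ⟨i, hi : ν i < r, rfl⟩, _, ⟨j, hj : ν j < s, rfl⟩, rfl⟩
  exact degreeSpan_mono ν e (by omega) (h i j)

theorem IsDegreeFiltered.exists_submodule_finrank_mul_le [StrongRankCondition R]
    (h : IsDegreeFiltered R ν e) (he : LinearIndependent R e) (hν : ν.Injective) {r s : ℕ}
    (hr : Iio r ⊆ range ν) (hs : Iio s ⊆ range ν) :
    ∃ V W : Submodule R A, finrank R V = r ∧ finrank R W = s ∧
      finrank R ↥(V * W) ≤ r + s - 1 := by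
  refine ⟨degreeSpan R ν e r, degreeSpan R ν e s, finrank_degreeSpan he hν hr,
    finrank_degreeSpan he hν hs, ?_⟩
  have := finite_degreeSpan (R := R) hν e (r + s - 1)
  calc finrank R ↥(degreeSpan R ν e r * degreeSpan R ν e s)
      ≤ finrank R (degreeSpan R ν e (r + s - 1)) :=
        Submodule.finrank_mono (h.degreeSpan_mul_le r s)
    _ ≤ r + s - 1 := finrank_degreeSpan_le hν e _

end IsDegreeFiltered

section Tower

variable {R S A : Type*} [CommSemiring R] [CommRing S] [Ring A] [Algebra R S] [Algebra S A]
  [Algebra R A] [IsScalarTower R S A] {m : ℕ}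

/-- The basis of a tower `R ⊆ S ⊆ A` formed by the vectors `b a • x ^ q`, where `x` generates `A`
over `S`, with `b a • x ^ q` in position `a + m * q`. -/
noncomputable def powerBasisTower (b : Basis (Fin m) R S) (pb : PowerBasis S A) :
    Basis (Fin (pb.dim * m)) R A :=
  (b.smulTower' pb.basis).reindex finProdFinEquiv

theorem powerBasisTower_apply (b : Basis (Fin m) R S) (pb : PowerBasis S A) (q : Fin pb.dim)
    (a : Fin m) : powerBasisTower b pb (finProdFinEquiv (q, a)) = b a • pb.gen ^ (q : ℕ) := by
  simp [powerBasisTower, Basis.smulTower'_apply]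

theorem smul_gen_pow_mem_degreeSpan (b : Basis (Fin m) R S) (pb : PowerBasis S A) {q n : ℕ}
    (hq : q < pb.dim) {y : S} (hy : y ∈ degreeSpan R Fin.val b n) :
    y • pb.gen ^ q ∈ degreeSpan R Fin.val (powerBasisTower b pb) (n + m * q) := by
  suffices degreeSpan R Fin.val b n ≤ (degreeSpan R Fin.val (powerBasisTower b pb)
      (n + m * q)).comap ((LinearMap.toSpanSingleton S A (pb.gen ^ q)).restrictScalars R) from
    this hy
  refine Submodule.span_le.2 ?_
  rintro _ ⟨a, ha : (a : ℕ) < n, rfl⟩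
  have hdeg : (finProdFinEquiv ((⟨q, hq⟩ : Fin pb.dim), a) : ℕ) < n + m * q := by
    simpa only [finProdFinEquiv_apply_val, add_lt_add_iff_right] using ha
  have hmem := mem_degreeSpan (R := R) (ν := Fin.val) (powerBasisTower b pb) hdeg
  rwa [powerBasisTower_apply] at hmem

theorem IsDegreeFiltered.powerBasisTower {b : Basis (Fin m) R S}
    (hb : IsDegreeFiltered R Fin.val b) (pb : PowerBasis S A) :
    IsDegreeFiltered R Fin.val (powerBasisTower b pb) := by
  intro i j
  obtain ⟨⟨q, a⟩, rfl⟩ := finProdFinEquiv.surjective i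
  obtain ⟨⟨p, c⟩, rfl⟩ := finProdFinEquiv.surjective j
  have degree_sum : (finProdFinEquiv (q, a) : ℕ) + finProdFinEquiv (p, c) + 1 =
      (a + c + 1 : ℕ) + m * (q + p) := by
    simp only [finProdFinEquiv_apply_val]
    ring
  rw [degree_sum]
  obtain no_overflow | overflow := lt_or_ge (q + p : ℕ) pb.dim
  · rw [powerBasisTower_apply, powerBasisTower_apply, smul_mul_smul_comm, ← pow_add]
    exact smul_gen_pow_mem_degreeSpan b pb no_overflow (hb a c)
  · rw [degreeSpan_val_eq_top]
    · exact Submodule.mem_top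
    · calc pb.dim * m ≤ m * (q + p) := by rw [mul_comm]; gcongr
        _ ≤ _ := Nat.le_add_left _ _

end Tower

theorem exists_basis_isDegreeFiltered (F E : Type*) [Field F] [Field E] [Algebra F E]
    [FiniteDimensional F E] :
    ∃ b : Basis (Fin (finrank F E)) F E, IsDegreeFiltered F Fin.val b := by
  suffices ∃ n, ∃ b : Basis (Fin n) F (⊤ : IntermediateField F E), IsDegreeFiltered F Fin.val b by
    obtain ⟨n, b, hb⟩ := this
    obtain rfl : finrank F E = n := by
      rw [← finrank_top', finrank_eq_card_basis b, Fintype.card_fin]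
    refine ⟨b.map topEquiv.toLinearEquiv, ?_⟩
    simpa using! hb.map (topEquiv : _ ≃ₐ[F] E).toAlgHom
  induction (⊤ : IntermediateField F E) using induction_on_adjoin with
  | base =>
    refine ⟨1, finBasisOfFinrankEq F _ IntermediateField.finrank_bot, fun i j => ?_⟩
    rw [degreeSpan_val_eq_top _ (by omega)]
    exact Submodule.mem_top
  | ih K x hK =>
    obtain ⟨m, b, hb⟩ := hK
    have hx : IsIntegral K x := .of_finite K x
    exact ⟨_, _, hb.powerBasisTower (adjoin.powerBasis hx)⟩

theorem linearIndependent_pow_of_transcendental {R A : Type*} [CommRing R] [Ring A] [Algebra R A]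
    {x : A} (hx : Transcendental R x) : LinearIndependent R (fun n : ℕ => x ^ n) := by
  have h := (Polynomial.basisMonomials R).linearIndependent.map' (Polynomial.aeval x).toLinearMap
    (LinearMap.ker_eq_bot.2 (transcendental_iff_injective.1 hx))
  simpa [Function.comp_def] using h

theorem exists_finiteDimensional_le_finrank {F E : Type*} [Field F] [Field E] [Algebra F E]
    [Algebra.IsAlgebraic F E] {n : ℕ} (hn : (n : Cardinal) ≤ Module.rank F E) :
    ∃ K : IntermediateField F E, FiniteDimensional F K ∧ n ≤ finrank F K := by
  obtain ⟨t, rfl, ht⟩ := le_rank_iff_exists_linearIndependent_finset.1 hn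
  have : FiniteDimensional F (adjoin F (t : Set E)) :=
    finiteDimensional_adjoin fun x _ => Algebra.IsIntegral.isIntegral x
  refine ⟨adjoin F t, this, ?_⟩
  calc t.card = finrank F (Submodule.span F (t : Set E)) := (finrank_span_finset_eq_card ht).symm
    _ ≤ finrank F (Subalgebra.toSubmodule (adjoin F (t : Set E)).toSubalgebra) :=
      Submodule.finrank_mono (Submodule.span_le.2 (subset_adjoin F _))

/-- Proposition 7.1 (small products property): for an arbitrary commutative field
extension `H ⊆ L` and positive integers `r, s ≤ dim_H L`, there exist `H`-subspaces
`A, B` of `L` with `dim_H A = r`, `dim_H B = s` and `dim_H ⟨AB⟩ ≤ r + s - 1`. -/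
theorem stmt_8 (H L : Type*) [Field H] [Field L] [Algebra H L]
    (r s : ℕ) (hr : 0 < r) (hs : 0 < s)
    (hrL : (r : Cardinal) ≤ Module.rank H L) (hsL : (s : Cardinal) ≤ Module.rank H L) :
    ∃ A B : Submodule H L, Module.finrank H A = r ∧ Module.finrank H B = s ∧
      Module.finrank H ↥(A * B) ≤ r + s - 1 := by
  by_cases halg : Algebra.IsAlgebraic H L
  · obtain ⟨K, hK, hle⟩ := exists_finiteDimensional_le_finrank (F := H) (E := L) (n := max r s)
      (max_rec' (fun n : ℕ => (n : Cardinal) ≤ Module.rank H L) hrL hsL)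
    obtain ⟨b, hb⟩ := exists_basis_isDegreeFiltered H K
    refine (hb.map K.val).exists_submodule_finrank_mul_le
      (b.linearIndependent.map' K.val.toLinearMap (LinearMap.ker_eq_bot.2 K.val.injective))
      Fin.val_injective ?_ ?_ <;> rw [Fin.range_val]
    · exact Iio_subset_Iio (le_of_max_le_left hle)
    · exact Iio_subset_Iio (le_of_max_le_right hle)
  · obtain ⟨x, hx⟩ := Algebra.transcendental_iff_not_isAlgebraic.2 halg
    exact (isDegreeFiltered_pow x).exists_submodule_finrank_mul_le
      (linearIndependent_pow_of_transcendental hx) Function.injective_id (by simp) (by simp)
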